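/- For every f ∈ ℤ^{b,+}, the element (−f)·w_0 is again b-dominant and σ(K_f) = (−q)^{ℓ(w_0)}·K_{(−f)·w_0}, where −f is the pointwise negation of f. -/

import Mathlib

/-!
Everything rests on the expansion
`K_f = ∑_w (-q)^{ℓ(w) - ℓ(w₀)} M_{f·w₀w}`, the sum being over block permutations.
If `f` is dominant then `f·w₀` is strictly antidominant, and along a reduced word each letter
`s_i` multiplies a prefix `u` with `u(i) < u(i+1)`; hence only the case
`M_g H_i = M_{g·s_i}` of the definition of `H_i` ever occurs and `M_{f·w₀} H_w = M_{f·w₀w}` (`Hword_single`, `Kel_expand`). In particular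
the choice of reduced word is immaterial and the braid relations are not needed.

Applying `σ` gives `∑_w (-q)^{ℓ(w₀) - ℓ(w)} M_{-f·w₀w}`. On the other side,
`(-q)^{ℓ(w₀)} K_{(-f)·w₀} = ∑_w (-q)^{ℓ(w)} M_{-f·w}`, as `w₀² = 1`. The substitution `w ↦ w₀w`
identifies the two sums because `ℓ(w₀w) + ℓ(w) = ℓ(w₀)` (`invCount_w0_mul`).

The length facts are obtained by identifying the word length `blen` on block permutations with
the number of inversions (`blen_eq`). Blocks enter only through the monotone function
`κ : Fin N → ℕ` sending an index to the number of its block (`exists_blockIndex`); block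
permutations are those `w` with `κ ∘ w = κ`.
-/

open Finset

noncomputable section

abbrev Tsp (N : ℕ) : Type := (Fin N → ℤ) →₀ RatFunc ℚ

def qq : RatFunc ℚ := RatFunc.X

def sgn {N : ℕ} (b : Fin N → Bool) (i : Fin N) : ℤ := if b i then -1 else 1

def IsZeroOneSeq (m n : ℕ) (b : Fin (m + n) → Bool) : Prop :=
  (Finset.univ.filter (fun i => b i = false)).card = m ∧
  (Finset.univ.filter (fun i => b i = true)).card = n

def Interior (N : ℕ) (b : Fin N → Bool) (i : ℕ) : Prop :=
  ∃ (h1 : i < N) (h2 : i + 1 < N), b ⟨i, h1⟩ = b ⟨i + 1, h2⟩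

def HM {N : ℕ} (b : Fin N → Bool) (i : ℕ) (f : Fin N → ℤ) : Tsp N :=
  if h : i + 1 < N then
    let i0 : Fin N := ⟨i, Nat.lt_of_succ_lt h⟩
    let i1 : Fin N := ⟨i + 1, h⟩
    if f i0 = f i1 then qq⁻¹ • Finsupp.single f 1
    else if sgn b i0 * f i0 < sgn b i0 * f i1 then
      Finsupp.single (f ∘ ⇑(Equiv.swap i0 i1)) 1
    else
      Finsupp.single (f ∘ ⇑(Equiv.swap i0 i1)) 1 - (qq - qq⁻¹) • Finsupp.single f 1
  else Finsupp.single f 1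

def HopN {N : ℕ} (b : Fin N → Bool) (i : ℕ) : Module.End (RatFunc ℚ) (Tsp N) :=
  Finsupp.lsum (RatFunc ℚ) fun f => LinearMap.toSpanSingleton (RatFunc ℚ) (Tsp N) (HM b i f)

def swapPerm (N i : ℕ) : Equiv.Perm (Fin N) :=
  if h : i + 1 < N then Equiv.swap ⟨i, Nat.lt_of_succ_lt h⟩ ⟨i + 1, h⟩ else 1

def wordProd (N : ℕ) (l : List ℕ) : Equiv.Perm (Fin N) := (l.map (swapPerm N)).prod

def Hword {N : ℕ} (b : Fin N → Bool) (l : List ℕ) : Module.End (RatFunc ℚ) (Tsp N) :=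
  ((l.map (HopN b)).reverse).prod

def blen {N : ℕ} (b : Fin N → Bool) (w : Equiv.Perm (Fin N)) : ℕ :=
  sInf {k | ∃ l : List ℕ, (∀ i ∈ l, Interior N b i) ∧ wordProd N l = w ∧ l.length = k}

def IsReducedWord {N : ℕ} (b : Fin N → Bool) (w : Equiv.Perm (Fin N)) (l : List ℕ) : Prop :=
  (∀ i ∈ l, Interior N b i) ∧ wordProd N l = w ∧ l.length = blen b w

open scoped Classical in
def Hw {N : ℕ} (b : Fin N → Bool) (w : Equiv.Perm (Fin N)) : Module.End (RatFunc ℚ) (Tsp N) :=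
  if h : ∃ l : List ℕ, IsReducedWord b w l then Hword b h.choose else 0

def BlockData (N : ℕ) (b : Fin N → Bool) (d : ℕ) (r : ℕ → ℕ) : Prop :=
  r 0 = 0 ∧ r d = N ∧ (∀ k < d, r k < r (k + 1)) ∧
  (∀ k < d, ∀ i j : Fin N,
    r k ≤ i.val → i.val < r (k + 1) → r k ≤ j.val → j.val < r (k + 1) → b i = b j) ∧
  (∀ k, 0 < k → k < d → ∀ (h1 : r k - 1 < N) (h2 : r k < N), b ⟨r k - 1, h1⟩ ≠ b ⟨r k, h2⟩)

def BlockPerm (N : ℕ) (d : ℕ) (r : ℕ → ℕ) (x : Equiv.Perm (Fin N)) : Prop :=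
  ∀ k < d, ∀ i : Fin N, r k ≤ i.val → i.val < r (k + 1) →
    r k ≤ (x i).val ∧ (x i).val < r (k + 1)

def IsW0 (N : ℕ) (d : ℕ) (r : ℕ → ℕ) (w0 : Equiv.Perm (Fin N)) : Prop :=
  ∀ k < d, ∀ i : Fin N, r k ≤ i.val → i.val < r (k + 1) →
    ((w0 i).val) = r k + r (k + 1) - 1 - i.val

def Dominant {N : ℕ} (b : Fin N → Bool) (d : ℕ) (r : ℕ → ℕ) (f : Fin N → ℤ) : Prop :=
  ∀ k < d, ∀ i j : Fin N, r k ≤ i.val → i.val < j.val → j.val < r (k + 1) →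
    sgn b i * f j < sgn b i * f i

def Antidominant {N : ℕ} (b : Fin N → Bool) (d : ℕ) (r : ℕ → ℕ) (f : Fin N → ℤ) : Prop :=
  ∀ k < d, ∀ i j : Fin N, r k ≤ i.val → i.val < j.val → j.val < r (k + 1) →
    sgn b i * f i ≤ sgn b i * f j

def StrictAntidominant {N : ℕ} (b : Fin N → Bool) (d : ℕ) (r : ℕ → ℕ) (f : Fin N → ℤ) : Prop :=
  ∀ k < d, ∀ i j : Fin N, r k ≤ i.val → i.val < j.val → j.val < r (k + 1) →
    sgn b i * f i < sgn b i * f j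

def WeaklyDominant {N : ℕ} (b : Fin N → Bool) (d : ℕ) (r : ℕ → ℕ) (f : Fin N → ℤ) : Prop :=
  ∀ k < d, ∀ i j : Fin N, r k ≤ i.val → i.val ≤ j.val → j.val < r (k + 1) →
    sgn b i * f j ≤ sgn b i * f i

open scoped Classical in
def H0 {N : ℕ} (b : Fin N → Bool) (d : ℕ) (r : ℕ → ℕ) (w0 : Equiv.Perm (Fin N)) :
    Module.End (RatFunc ℚ) (Tsp N) :=
  ∑ w ∈ Finset.univ.filter (fun x : Equiv.Perm (Fin N) => BlockPerm N d r x),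
    ((-qq) ^ ((blen b w : ℤ) - (blen b w0 : ℤ))) • Hw b w

def Kel {N : ℕ} (b : Fin N → Bool) (d : ℕ) (r : ℕ → ℕ) (w0 : Equiv.Perm (Fin N))
    (f : Fin N → ℤ) : Tsp N :=
  H0 b d r w0 (Finsupp.single (f ∘ ⇑w0) 1)

def qint (k : ℕ) : RatFunc ℚ := (qq ^ (k : ℤ) - qq ^ (-(k : ℤ))) / (qq - qq⁻¹)

def qfact : ℕ → RatFunc ℚ
  | 0 => 1
  | k + 1 => qfact k * qint (k + 1)

def bform {N : ℕ} (u v : Tsp N) : RatFunc ℚ := u.sum fun f c => c * v f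

def sigmaMap {N : ℕ} (bar : RatFunc ℚ →+* RatFunc ℚ) (u : Tsp N) : Tsp N :=
  u.sum fun f c => Finsupp.single (-f) (bar c)

def sharp {N : ℕ} (b : Fin N → Bool) (f : Fin N → ℤ) (a : ℤ) (j : ℕ) : ℤ :=
  ∑ i ∈ Finset.univ.filter (fun i : Fin N => j ≤ i.val ∧ f i ≤ a), sgn b i

def bruhatLE {N : ℕ} (b : Fin N → Bool) (g f : Fin N → ℤ) : Prop :=
  (∀ (a : ℤ) (j : ℕ), sharp b g a j ≤ sharp b f a j) ∧
  (∀ a : ℤ, sharp b g a 0 = sharp b f a 0)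

def HactFun {N : ℕ} (b : Fin N → Bool) (i : ℕ) (u : (Fin N → ℤ) → RatFunc ℚ) :
    (Fin N → ℤ) → RatFunc ℚ := fun h =>
  if hlt : i + 1 < N then
    let i0 : Fin N := ⟨i, Nat.lt_of_succ_lt hlt⟩
    let i1 : Fin N := ⟨i + 1, hlt⟩
    if h i0 = h i1 then qq⁻¹ * u h
    else if sgn b i0 * h i0 < sgn b i0 * h i1 then u (h ∘ ⇑(Equiv.swap i0 i1))
    else u (h ∘ ⇑(Equiv.swap i0 i1)) - (qq - qq⁻¹) * u h
  else u h


/-! ### Inversions -/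

/-- The inversions of `w`: pairs `i < j` with `w j < w i`. -/
def invSet {N : ℕ} (w : Equiv.Perm (Fin N)) : Finset (Fin N × Fin N) :=
  Finset.univ.filter fun p => p.1 < p.2 ∧ w p.2 < w p.1

/-- The number of inversions of `w`. -/
def invCount {N : ℕ} (w : Equiv.Perm (Fin N)) : ℕ := (invSet w).card

lemma mem_invSet {N : ℕ} (w : Equiv.Perm (Fin N)) (p : Fin N × Fin N) :
    p ∈ invSet w ↔ p.1 < p.2 ∧ w p.2 < w p.1 := by
  simp [invSet]

lemma swapPerm_of_lt {N i : ℕ} (h : i + 1 < N) :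
    swapPerm N i = Equiv.swap ⟨i, Nat.lt_of_succ_lt h⟩ ⟨i + 1, h⟩ := by
  simp [swapPerm, h]

lemma swapPerm_val {N i : ℕ} (h : i + 1 < N) (a : Fin N) :
    (swapPerm N i a).val =
      if a.val = i then i + 1 else if a.val = i + 1 then i else a.val := by
  rw [swapPerm_of_lt h, Equiv.swap_apply_def]
  simp only [Fin.ext_iff]
  split_ifs <;> rfl

lemma swapPerm_mul_self {N i : ℕ} (h : i + 1 < N) : swapPerm N i * swapPerm N i = 1 := by
  rw [swapPerm_of_lt h, Equiv.swap_mul_self]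

/-- Away from the pair `(i, i+1)`, applying `s_i` to both entries carries the inversions of
`w s_i` injectively to those of `w`. -/
lemma card_erase_le {N i : ℕ} (h : i + 1 < N) (w : Equiv.Perm (Fin N)) :
    ((invSet (w * swapPerm N i)).erase (⟨i, Nat.lt_of_succ_lt h⟩, ⟨i + 1, h⟩)).card ≤
      ((invSet w).erase (⟨i, Nat.lt_of_succ_lt h⟩, ⟨i + 1, h⟩)).card := by
  apply Finset.card_le_card_of_injOn (fun p => (swapPerm N i p.1, swapPerm N i p.2))
  · rintro ⟨x, y⟩ hp
    simp only [Finset.coe_erase, Set.mem_sdiff, Finset.mem_coe, mem_invSet,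
      Set.mem_singleton_iff, Prod.mk.injEq, Fin.ext_iff, Equiv.Perm.mul_apply] at hp ⊢
    obtain ⟨⟨h1, h2⟩, h3⟩ := hp
    refine ⟨⟨?_, h2⟩, ?_⟩
    · rw [Fin.lt_def] at h1 ⊢
      rw [swapPerm_val h, swapPerm_val h]
      split_ifs <;> omega
    · rw [Fin.lt_def] at h1
      rw [swapPerm_val h, swapPerm_val h]
      split_ifs <;> omega
  · rintro ⟨x, y⟩ _ ⟨x', y'⟩ _ he
    simpa using he

lemma invCount_mul_swap_le {N i : ℕ} (h : i + 1 < N) (w : Equiv.Perm (Fin N)) :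
    invCount (w * swapPerm N i) ≤ invCount w + 1 := by
  have h1 := card_erase_le h w
  have h2 := Finset.card_erase_le (s := invSet w)
    (a := (⟨i, Nat.lt_of_succ_lt h⟩, ⟨i + 1, h⟩))
  have h3 := Finset.pred_card_le_card_erase (s := invSet (w * swapPerm N i))
    (a := (⟨i, Nat.lt_of_succ_lt h⟩, ⟨i + 1, h⟩))
  unfold invCount
  omega

lemma invCount_mul_swap_lt {N i : ℕ} (h : i + 1 < N) (w : Equiv.Perm (Fin N))
    (hw : w ⟨i + 1, h⟩ < w ⟨i, Nat.lt_of_succ_lt h⟩) :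
    invCount (w * swapPerm N i) < invCount w := by
  have h1 := card_erase_le h w
  have hm : ((⟨i, Nat.lt_of_succ_lt h⟩, ⟨i + 1, h⟩) : Fin N × Fin N) ∈ invSet w := by
    rw [mem_invSet]
    exact ⟨by simp [Fin.lt_def], hw⟩
  have hn : ((⟨i, Nat.lt_of_succ_lt h⟩, ⟨i + 1, h⟩) : Fin N × Fin N) ∉
      invSet (w * swapPerm N i) := by
    rw [mem_invSet, swapPerm_of_lt h]
    simp only [Equiv.Perm.mul_apply, Equiv.swap_apply_left, Equiv.swap_apply_right, not_and,
      not_lt]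
    exact fun _ => hw.le
  rw [Finset.erase_eq_of_notMem hn] at h1
  have h2 := Finset.card_erase_add_one hm
  unfold invCount
  omega

lemma invCount_one {N : ℕ} : invCount (1 : Equiv.Perm (Fin N)) = 0 := by
  rw [invCount, Finset.card_eq_zero, Finset.eq_empty_iff_forall_notMem]
  intro p hp
  rw [mem_invSet] at hp
  exact absurd hp.1 (not_lt.mpr hp.2.le)

/-- A permutation without adjacent descents is the identity. -/
lemma eq_one_of_ascents {N : ℕ} (w : Equiv.Perm (Fin N))
    (hw : ∀ i (h : i + 1 < N), w ⟨i, Nat.lt_of_succ_lt h⟩ < w ⟨i + 1, h⟩) : w = 1 := by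
  have key : ∀ k i (h : i + k + 1 < N), w ⟨i, by omega⟩ < w ⟨i + k + 1, h⟩ := by
    intro k
    induction k with
    | zero => exact fun i h => hw i h
    | succ k ih => exact fun i h => (ih i (by omega)).trans (hw (i + k + 1) h)
  have hm : StrictMono w := by
    intro x y hxy
    have h := key (y.val - x.val - 1) x.val (by rw [Fin.lt_def] at hxy; omega)
    have hy : (⟨x.val + (y.val - x.val - 1) + 1, by rw [Fin.lt_def] at hxy; omega⟩ : Fin N) = y :=
      Fin.ext (by rw [Fin.lt_def] at hxy; simp only; omega)
    rwa [hy] at h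
  have := (StrictMono.range_inj hm strictMono_id).1 (by simp [w.surjective.range_eq])
  exact Equiv.ext fun x => congrFun this x

/-! ### Words and length -/

lemma wordProd_append {N : ℕ} (l : List ℕ) (i : ℕ) :
    wordProd N (l ++ [i]) = wordProd N l * swapPerm N i := by
  simp [wordProd]

lemma Hword_append {N : ℕ} (b : Fin N → Bool) (l : List ℕ) (i : ℕ) :
    Hword b (l ++ [i]) = HopN b i * Hword b l := by
  simp [Hword]

lemma invCount_wordProd_le {N : ℕ} (b : Fin N → Bool) (l : List ℕ)
    (hl : ∀ i ∈ l, Interior N b i) : invCount (wordProd N l) ≤ l.length := by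
  induction l using List.reverseRecOn with
  | nil => simp [wordProd, invCount_one]
  | append_singleton l i ih =>
    obtain ⟨-, h, -⟩ := hl i (by simp)
    have h1 := ih fun j hj => hl j (by simp [hj])
    have h2 := invCount_mul_swap_le h (wordProd N l)
    rw [wordProd_append, List.length_append]
    simp only [List.length_singleton]
    omega

/-- `κ` numbers the blocks of `b`: it is monotone, and `i` is interior exactly when `i` and `i+1`
lie in the same block. -/
def BlockIndex {N : ℕ} (b : Fin N → Bool) (κ : Fin N → ℕ) : Prop :=
  Monotone κ ∧ ∀ i (h : i + 1 < N),
    Interior N b i ↔ κ ⟨i, Nat.lt_of_succ_lt h⟩ = κ ⟨i + 1, h⟩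

lemma kappa_swapPerm {N : ℕ} {b : Fin N → Bool} {κ : Fin N → ℕ} (hκ : BlockIndex b κ)
    {i : ℕ} (hi : Interior N b i) (x : Fin N) : κ (swapPerm N i x) = κ x := by
  obtain ⟨-, h, -⟩ := id hi
  have he := (hκ.2 i h).1 hi
  rw [swapPerm_of_lt h, Equiv.swap_apply_def]
  split_ifs with h1 h2
  · rw [h1, he]
  · rw [h2, he]
  · rfl

lemma kappa_wordProd {N : ℕ} {b : Fin N → Bool} {κ : Fin N → ℕ} (hκ : BlockIndex b κ)
    (l : List ℕ) (hl : ∀ i ∈ l, Interior N b i) (x : Fin N) : κ (wordProd N l x) = κ x := by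
  induction l using List.reverseRecOn generalizing x with
  | nil => simp [wordProd]
  | append_singleton l i ih =>
    rw [wordProd_append, Equiv.Perm.mul_apply, ih fun j hj => hl j (by simp [hj]),
      kappa_swapPerm hκ (hl i (by simp))]

/-- An adjacent descent of a block permutation occurs inside a block, so it can be removed by an
interior transposition. -/
lemma exists_word {N : ℕ} {b : Fin N → Bool} {κ : Fin N → ℕ} (hκ : BlockIndex b κ) (k : ℕ) :
    ∀ w : Equiv.Perm (Fin N), (∀ x, κ (w x) = κ x) → invCount w ≤ k →
      ∃ l : List ℕ, (∀ i ∈ l, Interior N b i) ∧ wordProd N l = w ∧ l.length ≤ k := by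
  induction k with
  | zero =>
    intro w _ hk
    refine ⟨[], by simp, ?_, le_rfl⟩
    rw [eq_one_of_ascents w]
    · simp [wordProd]
    · intro i h
      by_contra hc
      have hne : w ⟨i + 1, h⟩ ≠ w ⟨i, Nat.lt_of_succ_lt h⟩ := by simp
      have := invCount_mul_swap_lt h w (lt_of_le_of_ne (not_lt.1 hc) hne)
      omega
  | succ k ih =>
    intro w hw hk
    by_cases hd : ∃ i, ∃ h : i + 1 < N, w ⟨i + 1, h⟩ < w ⟨i, Nat.lt_of_succ_lt h⟩
    · obtain ⟨i, h, hlt⟩ := hd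
      have hint : Interior N b i := by
        rw [hκ.2 i h]
        apply le_antisymm
        · exact hκ.1 (by simp [Fin.le_def])
        · rw [← hw ⟨i + 1, h⟩, ← hw ⟨i, _⟩]
          exact hκ.1 hlt.le
      obtain ⟨l, h1, h2, h3⟩ := ih (w * swapPerm N i)
        (fun x => by rw [Equiv.Perm.mul_apply, hw, kappa_swapPerm hκ hint])
        (by have := invCount_mul_swap_lt h w hlt; omega)
      refine ⟨l ++ [i], ?_, ?_, by simpa using h3⟩
      · intro j hj
        rcases List.mem_append.1 hj with hj | hj
        · exact h1 j hj
        · rw [List.mem_singleton.1 hj]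
          exact hint
      · rw [wordProd_append, h2, mul_assoc, swapPerm_mul_self h, mul_one]
    · refine ⟨[], by simp, ?_, by simp⟩
      rw [eq_one_of_ascents w]
      · simp [wordProd]
      · intro i h
        by_contra hc
        have hne : w ⟨i + 1, h⟩ ≠ w ⟨i, Nat.lt_of_succ_lt h⟩ := by simp
        exact hd ⟨i, h, lt_of_le_of_ne (not_lt.1 hc) hne⟩

/-- On block permutations the word length is the number of inversions. -/
lemma blen_eq {N : ℕ} {b : Fin N → Bool} {κ : Fin N → ℕ} (hκ : BlockIndex b κ)
    (w : Equiv.Perm (Fin N)) (hw : ∀ x, κ (w x) = κ x) : blen b w = invCount w := by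
  obtain ⟨l, h1, h2, h3⟩ := exists_word hκ _ w hw le_rfl
  have h4 := invCount_wordProd_le b l h1
  rw [h2] at h4
  apply le_antisymm
  · exact Nat.sInf_le ⟨l, h1, h2, le_antisymm h3 h4⟩
  · refine le_csInf ⟨l.length, l, h1, h2, rfl⟩ ?_
    rintro k ⟨l', h1', h2', rfl⟩
    rw [← h2']
    exact invCount_wordProd_le b l' h1'

lemma exists_isReducedWord {N : ℕ} {b : Fin N → Bool} {κ : Fin N → ℕ} (hκ : BlockIndex b κ)
    (w : Equiv.Perm (Fin N)) (hw : ∀ x, κ (w x) = κ x) : ∃ l, IsReducedWord b w l := by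
  obtain ⟨l, h1, h2, h3⟩ := exists_word hκ _ w hw le_rfl
  have h4 := invCount_wordProd_le b l h1
  rw [h2] at h4
  exact ⟨l, h1, h2, by rw [blen_eq hκ w hw]; omega⟩

/-! ### Action of the Hecke generators on an antidominant weight -/

lemma HopN_single {N : ℕ} (b : Fin N → Bool) (i : ℕ) (f : Fin N → ℤ) :
    HopN b i (Finsupp.single f 1) = HM b i f := by
  simp [HopN]

/-- Along a word whose length equals its number of inversions, every letter acts on the basis
vector `M_g` reached so far by `M_g H_i = M_{g·s_i}`. -/
lemma Hword_single {N : ℕ} {b : Fin N → Bool} {κ : Fin N → ℕ} (hκ : BlockIndex b κ)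
    (hs : ∀ x y, κ x = κ y → sgn b x = sgn b y) (g : Fin N → ℤ)
    (hg : ∀ x y, κ x = κ y → x < y → sgn b x * g x < sgn b x * g y) (l : List ℕ)
    (hl : ∀ i ∈ l, Interior N b i) (hlen : l.length ≤ invCount (wordProd N l)) :
    Hword b l (Finsupp.single g 1) = Finsupp.single (g ∘ ⇑(wordProd N l)) 1 := by
  induction l using List.reverseRecOn with
  | nil => simp [wordProd, Hword]
  | append_singleton l i ih =>
    have hint : Interior N b i := hl i (by simp)
    have hl' : ∀ j ∈ l, Interior N b j := fun j hj => hl j (by simp [hj])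
    obtain ⟨-, h, -⟩ := id hint
    rw [wordProd_append] at hlen ⊢
    simp only [List.length_append, List.length_singleton] at hlen
    have h1 := invCount_wordProd_le b l hl'
    have h2 := invCount_mul_swap_le h (wordProd N l)
    have hne : wordProd N l ⟨i + 1, h⟩ ≠ wordProd N l ⟨i, Nat.lt_of_succ_lt h⟩ := by simp
    have hasc : wordProd N l ⟨i, Nat.lt_of_succ_lt h⟩ < wordProd N l ⟨i + 1, h⟩ := by
      by_contra hc
      have := invCount_mul_swap_lt h _ (lt_of_le_of_ne (not_lt.1 hc) hne)
      omega
    have hk := (hκ.2 i h).1 hint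
    have hk0 := kappa_wordProd hκ l hl' ⟨i, Nat.lt_of_succ_lt h⟩
    have hlt := hg _ _ (by rw [hk0, kappa_wordProd hκ l hl', hk]) hasc
    rw [hs _ _ hk0] at hlt
    rw [Hword_append, Module.End.mul_apply, ih hl' (by omega), HopN_single, HM, dif_pos h]
    simp only [Function.comp_apply]
    rw [if_neg (fun he => by rw [he] at hlt; exact lt_irrefl _ hlt), if_pos hlt,
      swapPerm_of_lt h]
    rfl

lemma Hw_single {N : ℕ} {b : Fin N → Bool} {κ : Fin N → ℕ} (hκ : BlockIndex b κ)
    (hs : ∀ x y, κ x = κ y → sgn b x = sgn b y) (g : Fin N → ℤ)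
    (hg : ∀ x y, κ x = κ y → x < y → sgn b x * g x < sgn b x * g y)
    (w : Equiv.Perm (Fin N)) (hw : ∀ x, κ (w x) = κ x) :
    Hw b w (Finsupp.single g 1) = Finsupp.single (g ∘ ⇑w) 1 := by
  have he := exists_isReducedWord hκ w hw
  rw [Hw, dif_pos he]
  obtain ⟨h1, h2, h3⟩ := he.choose_spec
  rw [Hword_single hκ hs g hg _ h1 (by rw [h2, h3, blen_eq hκ w hw]), h2]

/-! ### Blocks and the longest element -/

lemma exists_blockIndex {N d : ℕ} {b : Fin N → Bool} {r : ℕ → ℕ} (hB : BlockData N b d r) :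
    ∃ κ : Fin N → ℕ, BlockIndex b κ ∧
      (∀ x, κ x < d ∧ r (κ x) ≤ x.val ∧ x.val < r (κ x + 1)) ∧
      (∀ x k, k < d → r k ≤ x.val → x.val < r (k + 1) → κ x = k) := by
  obtain ⟨h0, hd, hlt, hc, hne⟩ := hB
  have hmono : ∀ j, j ≤ d → ∀ k, k ≤ j → r k ≤ r j := by
    intro j
    induction j with
    | zero => intro _ k hk; rw [Nat.le_zero.1 hk]
    | succ j ih =>
      intro hj k hk
      rcases Nat.lt_or_eq_of_le hk with hk | rfl
      · exact (ih (by omega) k (by omega)).trans (hlt j (by omega)).le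
      · exact le_rfl
  have hex : ∀ j, j ≤ d → ∀ x : ℕ, x < r j → ∃ k, k < d ∧ r k ≤ x ∧ x < r (k + 1) := by
    intro j
    induction j with
    | zero => intro _ x hx; omega
    | succ j ih =>
      intro hj x hx
      by_cases hxj : x < r j
      · exact ih (by omega) x hxj
      · exact ⟨j, hj, not_lt.1 hxj, hx⟩
  choose κ hκ using fun x : Fin N => hex d le_rfl x.val (by rw [hd]; exact x.2)
  have hmonoκ : Monotone κ := by
    intro x y hxy
    by_contra hcon
    have h1 := hmono (κ x) (hκ x).1.le (κ y + 1) (by omega)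
    have := (hκ x).2.1
    have := (hκ y).2.2
    rw [Fin.le_def] at hxy
    omega
  have huniq : ∀ (x : Fin N) k, k < d → r k ≤ x.val → x.val < r (k + 1) → κ x = k := by
    intro x k hk h1 h2
    obtain ⟨ha, hb, hc⟩ := hκ x
    rcases lt_trichotomy (κ x) k with h | h | h
    · have := hmono k hk.le (κ x + 1) h
      omega
    · exact h
    · have := hmono (κ x) ha.le (k + 1) h
      omega
  refine ⟨κ, ⟨hmonoκ, fun i h => ⟨?_, ?_⟩⟩, hκ, huniq⟩
  · rintro ⟨h1, h2, he⟩
    by_contra hcon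
    obtain ⟨ha, hb, hc'⟩ := hκ ⟨i, h1⟩
    obtain ⟨ha', hb', hc''⟩ := hκ ⟨i + 1, h⟩
    have hle := hmonoκ (show (⟨i, h1⟩ : Fin N) ≤ ⟨i + 1, h⟩ by simp [Fin.le_def])
    have hl : κ ⟨i, h1⟩ + 1 ≤ κ ⟨i + 1, h⟩ := by
      have : κ ⟨i, h1⟩ ≠ κ ⟨i + 1, h⟩ := hcon
      omega
    have h3 := hmono _ ha'.le _ hl
    simp only at hb hc' hb' hc''
    have h4 : r (κ ⟨i, h1⟩ + 1) = i + 1 := by omega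
    -- `i + 1` is the first index of its block, so the two values of `b` differ.
    have h5 := hne (κ ⟨i, h1⟩ + 1) (by omega) (by omega) (by omega) (by omega)
    apply h5
    have e1 : (⟨r (κ ⟨i, h1⟩ + 1) - 1, by omega⟩ : Fin N) = ⟨i, h1⟩ :=
      Fin.ext (by simp only; omega)
    have e2 : (⟨r (κ ⟨i, h1⟩ + 1), by omega⟩ : Fin N) = ⟨i + 1, h⟩ := Fin.ext h4
    rw [e1, e2, he]
  · intro he
    obtain ⟨ha, hb, hc'⟩ := hκ ⟨i, Nat.lt_of_succ_lt h⟩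
    obtain ⟨ha', hb', hc''⟩ := hκ ⟨i + 1, h⟩
    rw [← he] at hb' hc''
    exact ⟨Nat.lt_of_succ_lt h, h, hc _ ha _ _ hb hc' hb' hc''⟩

lemma blockPerm_iff {N d : ℕ} {r : ℕ → ℕ} {κ : Fin N → ℕ}
    (h1 : ∀ x, κ x < d ∧ r (κ x) ≤ x.val ∧ x.val < r (κ x + 1))
    (h2 : ∀ x k, k < d → r k ≤ x.val → x.val < r (k + 1) → κ x = k)
    (w : Equiv.Perm (Fin N)) : BlockPerm N d r w ↔ ∀ x, κ (w x) = κ x := by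
  constructor
  · intro h x
    obtain ⟨ha, hb, hc⟩ := h1 x
    obtain ⟨hd, he⟩ := h _ ha x hb hc
    exact h2 _ _ ha hd he
  · intro h k hk x ha hb
    obtain ⟨hc, hd, he⟩ := h1 (w x)
    rw [h x, h2 x k hk ha hb] at hd he
    exact ⟨hd, he⟩

/-- A pair `i < j` is an inversion of exactly one of `w` and `w₀w` if it lies in one block, and of
neither otherwise; the pairs inside blocks are the inversions of `w₀`. -/
lemma invCount_w0_mul {N : ℕ} {κ : Fin N → ℕ} (hκ : Monotone κ) (w0 w : Equiv.Perm (Fin N))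
    (hw0 : ∀ x, κ (w0 x) = κ x) (hrev : ∀ x y, κ x = κ y → x < y → w0 y < w0 x)
    (hw : ∀ x, κ (w x) = κ x) : invCount (w0 * w) + invCount w = invCount w0 := by
  have hsame : ∀ v : Equiv.Perm (Fin N), (∀ x, κ (v x) = κ x) →
      ∀ x y, x < y → v y < v x → κ x = κ y := by
    intro v hv x y hxy hlt
    refine le_antisymm (hκ hxy.le) ?_
    rw [← hv x, ← hv y]
    exact hκ hlt.le
  have hdisj : Disjoint (invSet (w0 * w)) (invSet w) := by
    rw [Finset.disjoint_left]
    intro p hp hq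
    rw [mem_invSet] at hp hq
    have hk := hsame w hw _ _ hq.1 hq.2
    have := hrev (w p.2) (w p.1) (by rw [hw, hw, hk]) hq.2
    exact absurd hp.2 (not_lt.2 this.le)
  have hunion : invSet (w0 * w) ∪ invSet w = invSet w0 := by
    ext p
    rw [Finset.mem_union, mem_invSet, mem_invSet, mem_invSet]
    constructor
    · rintro (⟨h1, h2⟩ | ⟨h1, h2⟩)
      · exact ⟨h1, hrev _ _ (hsame (w0 * w)
          (fun x => by rw [Equiv.Perm.mul_apply, hw0, hw]) _ _ h1 h2) h1⟩
      · exact ⟨h1, hrev _ _ (hsame w hw _ _ h1 h2) h1⟩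
    · rintro ⟨h1, h2⟩
      have hk := hsame w0 hw0 _ _ h1 h2
      rcases lt_trichotomy (w p.1) (w p.2) with h | h | h
      · exact Or.inl ⟨h1, hrev _ _ (by rw [hw, hw, hk]) h⟩
      · exact absurd (w.injective h) h1.ne
      · exact Or.inr ⟨h1, h⟩
  unfold invCount
  rw [← hunion, Finset.card_union_of_disjoint hdisj]

open scoped Classical in
/-- `K_f = ∑_w (-q)^{ℓ(w) - ℓ(w₀)} M_{f·w₀w}` whenever `f·w₀` is strictly antidominant. -/
lemma Kel_expand {N d : ℕ} {b : Fin N → Bool} {r : ℕ → ℕ} {κ : Fin N → ℕ}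
    (hκ : BlockIndex b κ) (hP : ∀ w, BlockPerm N d r w ↔ ∀ x, κ (w x) = κ x)
    (hs : ∀ x y, κ x = κ y → sgn b x = sgn b y) (w0 : Equiv.Perm (Fin N))
    (hw0 : ∀ x, κ (w0 x) = κ x) (f : Fin N → ℤ)
    (hf : ∀ x y, κ x = κ y → x < y → sgn b x * f (w0 x) < sgn b x * f (w0 y)) :
    Kel b d r w0 f =
      ∑ w ∈ Finset.univ.filter (fun w : Equiv.Perm (Fin N) => ∀ x, κ (w x) = κ x),
        Finsupp.single (f ∘ ⇑(w0 * w)) ((-qq) ^ ((invCount w : ℤ) - (invCount w0 : ℤ))) := by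
  rw [Kel, H0, LinearMap.sum_apply]
  refine Finset.sum_congr (by ext w; simp [hP]) fun w hw => ?_
  have hw' : ∀ x, κ (w x) = κ x := by simpa using hw
  rw [LinearMap.smul_apply, Hw_single hκ hs (f ∘ ⇑w0) hf w hw', blen_eq hκ w hw', blen_eq hκ w0 hw0,
    Finsupp.smul_single, smul_eq_mul, mul_one]
  rfl

lemma sigmaMap_sum_single {N : ℕ} (bar : RatFunc ℚ →+* RatFunc ℚ) {ι : Type*} (s : Finset ι)
    (g : ι → Fin N → ℤ) (c : ι → RatFunc ℚ) :
    sigmaMap bar (∑ i ∈ s, Finsupp.single (g i) (c i)) =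
      ∑ i ∈ s, Finsupp.single (-(g i)) (bar (c i)) := by
  unfold sigmaMap
  rw [← Finsupp.sum_finsetSum_index]
  · refine Finset.sum_congr rfl fun i _ => ?_
    rw [Finsupp.sum_single_index]
    simp
  · simp
  · simp


/-- For `b`-dominant `f`, the element `(−f)·w_0` is again `b`-dominant and
`σ(K_f) = (−q)^{ℓ(w_0)} K_{(−f)·w_0}`. -/
theorem sigma_Kel (m n d : ℕ) (b : Fin (m + n) → Bool) (r : ℕ → ℕ)
    (w0 : Equiv.Perm (Fin (m + n))) (hb : IsZeroOneSeq m n b)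
    (hblock : BlockData (m + n) b d r) (hw0 : IsW0 (m + n) d r w0)
    (bar : RatFunc ℚ →+* RatFunc ℚ) (hbarX : bar RatFunc.X = (RatFunc.X)⁻¹)
    (hbarC : ∀ c : ℚ, bar (algebraMap ℚ (RatFunc ℚ) c) = algebraMap ℚ (RatFunc ℚ) c)
    (f : Fin (m + n) → ℤ) (hf : Dominant b d r f) :
    Dominant b d r ((-f) ∘ ⇑w0) ∧
    sigmaMap bar (Kel b d r w0 f) = ((-qq) ^ (blen b w0)) • Kel b d r w0 ((-f) ∘ ⇑w0) := by
  classical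
  obtain ⟨κ, hκ, h1, h2⟩ := exists_blockIndex hblock
  have hP := blockPerm_iff h1 h2
  have hs : ∀ x y, κ x = κ y → sgn b x = sgn b y := by
    intro x y hxy
    obtain ⟨ha, hb1, hc⟩ := h1 x
    obtain ⟨-, hb', hc'⟩ := h1 y
    rw [← hxy] at hb' hc'
    rw [sgn, sgn, hblock.2.2.2.1 _ ha x y hb1 hc hb' hc']
  have hval : ∀ x, (w0 x).val = r (κ x) + r (κ x + 1) - 1 - x.val := fun x =>
    hw0 _ (h1 x).1 x (h1 x).2.1 (h1 x).2.2
  have hw0κ : ∀ x, κ (w0 x) = κ x := by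
    intro x
    obtain ⟨ha, hb1, hc⟩ := h1 x
    have := hval x
    exact h2 _ _ ha (by omega) (by omega)
  have hrev : ∀ x y, κ x = κ y → x < y → w0 y < w0 x := by
    intro x y hk hxy
    have hx := hval x
    have hy := hval y
    obtain ⟨-, hb1, hc⟩ := h1 y
    rw [← hk] at hy hb1 hc
    rw [Fin.lt_def] at hxy ⊢
    omega
  have hinv : ∀ x, w0 (w0 x) = x := by
    intro x
    obtain ⟨-, hb1, hc⟩ := h1 x
    have hx := hval x
    have hy := hval (w0 x)
    rw [hw0κ] at hy
    apply Fin.ext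
    omega
  have hinv' : w0 * w0 = 1 := Equiv.ext hinv
  have hfκ : ∀ x y, κ x = κ y → x < y → sgn b x * f y < sgn b x * f x := by
    intro x y hk hxy
    obtain ⟨ha, hb1, -⟩ := h1 x
    obtain ⟨-, -, hc⟩ := h1 y
    rw [← hk] at hc
    exact hf _ ha x y hb1 hxy hc
  have hanti : ∀ x y, κ x = κ y → x < y → sgn b x * f (w0 x) < sgn b x * f (w0 y) := by
    intro x y hk hxy
    have := hfκ (w0 y) (w0 x) (by rw [hw0κ, hw0κ, hk]) (hrev x y hk hxy)
    rwa [hs (w0 y) x (by rw [hw0κ, hk])] at this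
  refine ⟨?_, ?_⟩
  · intro k hk x y ha hxy hc
    have hx := h2 x k hk ha (by omega)
    have hy := h2 y k hk (by omega) hc
    have := hanti x y (by rw [hx, hy]) hxy
    simp only [Function.comp_apply, Pi.neg_apply, mul_neg]
    linarith
  · rw [Kel_expand hκ hP hs w0 hw0κ f hanti, Kel_expand hκ hP hs w0 hw0κ ((-f) ∘ ⇑w0) ?_,
      sigmaMap_sum_single, Finset.smul_sum]
    · have hq : (-qq : RatFunc ℚ) ≠ 0 := neg_ne_zero.2 RatFunc.X_ne_zero
      have hbar : bar (-qq) = (-qq)⁻¹ := by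
        rw [map_neg, qq, hbarX, inv_neg]
      refine Finset.sum_bij' (fun w _ => w0 * w) (fun w _ => w0 * w) ?_ ?_ ?_ ?_ ?_
      · intro w hw
        simp only [Finset.mem_filter, Finset.mem_univ, true_and, Equiv.Perm.mul_apply] at hw ⊢
        exact fun x => by rw [hw0κ, hw]
      · intro w hw
        simp only [Finset.mem_filter, Finset.mem_univ, true_and, Equiv.Perm.mul_apply] at hw ⊢
        exact fun x => by rw [hw0κ, hw]
      · intro w _
        simp only [← mul_assoc, hinv', one_mul]
      · intro w _
        simp only [← mul_assoc, hinv', one_mul]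
      · intro w hw
        have hwκ : ∀ x, κ (w x) = κ x := by simpa using hw
        have hlen := invCount_w0_mul hκ.1 w0 w hw0κ hrev hwκ
        rw [Finsupp.smul_single, smul_eq_mul, blen_eq hκ w0 hw0κ, map_zpow₀, hbar]
        congr 1
        · funext x
          simp [hinv]
        · rw [← zpow_natCast, ← zpow_add₀ hq, inv_zpow, ← zpow_neg]
          congr 1
          omega
    · intro x y hk hxy
      simp only [Function.comp_apply, Pi.neg_apply, hinv, mul_neg]
      linarith [hfκ x y hk hxy]

end
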